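/- Let RG be a region graph with exactly three terminal vertices (n = 3) satisfying Assumption 1, and suppose RG is terminal-separable. Then RG is feasible if at least one of the following conditions holds: (1) |Λ_{j_1}| ≥ 3 and |Λ_{j_2}| ≥ 3 for some pair {j_1,j_2} ⊆ {1,2,3}; (2) for every pair {j_1,j_2} ⊆ {1,2,3}, if |Λ_{j_1}| = |Λ_{j_2}| = 2 then Λ_{j_1} ∩ Λ_{j_2} = ∅; (3) S_i ∉ Λ_j for all i, j ∈ {1,2,3}; (4) there is a pair {ℓ',ℓ''} ⊆ {1,2,3} such that Λ_j ∩ reg°(S_{ℓ'},S_{ℓ''}) ≠ ∅ for all j ∈ {1,2,3}. -/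

import Mathlib

namespace SumNetworksPaper

/-- `SuperReg Adj Θ R` : `R` belongs to the super region generated by `Θ`:
the smallest set containing `Θ` and containing every vertex whose parent set
is nonempty and entirely contained in the set. -/
inductive SuperReg {V : Type} (Adj : V → V → Prop) (Θ : Set V) : V → Prop
  | base {R : V} : R ∈ Θ → SuperReg Adj Θ R
  | step {R : V} : (∃ P, Adj P R) → (∀ P, Adj P R → SuperReg Adj Θ P) →
      SuperReg Adj Θ R

/-- The super region `reg(Θ)` as a set. -/
def superReg {V : Type} (Adj : V → V → Prop) (Θ : Set V) : Set V :=
  {R | SuperReg Adj Θ R}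

/-- A region graph: a finite directed acyclic simple graph with three source
vertices `S 0, S 1, S 2` (which have no parents) and `n` terminal vertices
`T 0, …, T (n-1)`, in which every non-source vertex has at least two parents.
`Adj P R` means that there is an edge from `P` to `R`, i.e. `P` is a parent of `R`. -/
structure RegionGraph (n : ℕ) where
  V : Type
  fintypeV : Fintype V
  Adj : V → V → Prop
  acyclic : ∀ v : V, ¬ Relation.TransGen Adj v v
  S : Fin 3 → V
  T : Fin n → V
  S_inj : Function.Injective S
  T_inj : Function.Injective T
  source_no_parent : ∀ (i : Fin 3) (v : V), ¬ Adj v (S i)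
  two_parents : ∀ v : V, (∀ i : Fin 3, v ≠ S i) →
    ∃ p q : V, p ≠ q ∧ Adj p v ∧ Adj q v

namespace RegionGraph

variable {n : ℕ} (G : RegionGraph n)

/-- The super region `reg(Θ)`. -/
def reg (Θ : Set G.V) : Set G.V := superReg G.Adj Θ

/-- `reg°(Θ) = reg(Θ) ∖ Θ`. -/
def regO (Θ : Set G.V) : Set G.V := G.reg Θ \ Θ

/-- `reg(S_i, S_j)`. -/
def regPair (i j : Fin 3) : Set G.V := G.reg {G.S i, G.S j}

/-- `u → v` : there is a directed path from `u` to `v` (possibly trivial). -/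
def Reaches (u v : G.V) : Prop := Relation.ReflTransGen G.Adj u v

/-- `Π = reg(S_1,S_2) ∪ reg(S_1,S_3) ∪ reg(S_2,S_3)`. -/
def bigPi : Set G.V := G.regPair 0 1 ∪ G.regPair 0 2 ∪ G.regPair 1 2

/-- `Ω_I` : vertices outside `Π` reaching exactly the terminals `T j`, `j ∈ I`. -/
def Omega (I : Set (Fin n)) : Set G.V :=
  {R | R ∉ G.bigPi ∧ ∀ j : Fin n, j ∈ I ↔ G.Reaches R (G.T j)}

/-- `Λ_I` : vertices of `Π` having a child in `Ω_I`. -/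
def Lambda (I : Set (Fin n)) : Set G.V :=
  {Q | Q ∈ G.bigPi ∧ ∃ R, G.Adj Q R ∧ R ∈ G.Omega I}

/-- Assumption 1: no terminal vertex lies in `Π`. -/
def Assumption1 : Prop := ∀ j : Fin n, G.T j ∉ G.bigPi

/-- Terminal-separability: `Ω_I = ∅` whenever `|I| > 1`. -/
def TerminalSeparable : Prop :=
  ∀ I : Set (Fin n), 1 < I.ncard → G.Omega I = ∅

/-- A linear code of the region graph over `F`. -/
def IsLinearCode (F : Type) [Field F] (d : G.V → Fin 3 → F) : Prop :=
  (∀ i : Fin 3, d (G.S i) = Pi.single i 1) ∧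
  ∀ v : G.V, (∀ i : Fin 3, v ≠ G.S i) →
    d v ∈ Submodule.span F (d '' {p | G.Adj p v})

/-- A linear solution: a linear code giving `ᾱ = (1,1,1)` at every terminal. -/
def IsLinearSolution (F : Type) [Field F] (d : G.V → Fin 3 → F) : Prop :=
  G.IsLinearCode F d ∧ ∀ j : Fin n, d (G.T j) = fun _ => 1

/-- Feasibility: existence of a linear solution over some finite field. -/
def Feasible : Prop :=
  ∃ (F : Type) (_ : Field F) (_ : Fintype F) (d : G.V → Fin 3 → F),
    G.IsLinearSolution F d

/-- Conditions (1)–(3) on a family `{d_R : R ∈ Π}`. -/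
def Conds123 (F : Type) [Field F] (d : G.V → Fin 3 → F) : Prop :=
  (∀ i : Fin 3, d (G.S i) = Pi.single i 1) ∧
  (∀ R ∈ G.bigPi, (∀ i : Fin 3, R ≠ G.S i) →
    d R ∈ Submodule.span F (d '' {p | G.Adj p R})) ∧
  ∀ j : Fin n, (fun _ => (1 : F)) ∈ Submodule.span F (d '' G.Lambda {j})

/-- `I` is a partition of `Π` into nonempty classes. -/
def IsPartitionOfPi (I : Set (Set G.V)) : Prop :=
  (∀ Δ ∈ I, Δ.Nonempty ∧ Δ ⊆ G.bigPi) ∧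
  ⋃₀ I = G.bigPi ∧
  ∀ Δ ∈ I, ∀ Δ' ∈ I, Δ ≠ Δ' → Δ ∩ Δ' = ∅

/-- The three sources lie in three distinct classes of the partition. -/
def SourcesSeparated (I : Set (Set G.V)) : Prop :=
  ∀ Δ ∈ I, ∀ i j : Fin 3, G.S i ∈ Δ → G.S j ∈ Δ → i = j

/-- `[S_i]_i = [S_i]_{i,j₁} ∪ [S_i]_{i,j₂}` for the class `Δ` of `S_i`. -/
def srcSub (i : Fin 3) (Δ : Set G.V) : Set G.V :=
  Δ ∩ ⋃ (j : Fin 3) (_ : j ≠ i), G.regPair i j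

/-- `X` is a subclass of the class `Δ`. -/
def IsSubclass (Δ X : Set G.V) : Prop :=
  (∃ i : Fin 3, G.S i ∈ Δ ∧
    (X = G.srcSub i Δ ∨
      ∃ j k : Fin 3, j ≠ k ∧ j ≠ i ∧ k ≠ i ∧ X = Δ ∩ G.regPair j k)) ∨
  ((∀ i : Fin 3, G.S i ∉ Δ) ∧ ∃ i j : Fin 3, i ≠ j ∧ X = Δ ∩ G.regPair i j)

/-- The two classes `Δ'`, `Δ''` are connected. -/
def ClassesConnected (Δ' Δ'' : Set G.V) : Prop :=
  (∃ (j : Fin n) (X' X'' : Set G.V),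
      G.IsSubclass Δ' X' ∧ G.IsSubclass Δ'' X'' ∧ G.Lambda {j} ⊆ X' ∪ X'') ∨
  ∃ i j : Fin 3, i ≠ j ∧
    (G.reg (Δ' ∩ G.regPair i j) ∩ G.reg (Δ'' ∩ G.regPair i j)).Nonempty

/-- The partition `I` of `Π` is compatible. -/
def Compatible (I : Set (Set G.V)) : Prop :=
  G.SourcesSeparated I ∧
  (∀ Δ' ∈ I, ∀ Δ'' ∈ I, Δ' ≠ Δ'' → ¬ G.ClassesConnected Δ' Δ'') ∧
  ∀ (j : Fin n) (i₁ i₂ : Fin 3), i₁ ≠ i₂ →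
    ∀ Δ₁ ∈ I, ∀ Δ₂ ∈ I, G.S i₁ ∈ Δ₁ → G.S i₂ ∈ Δ₂ →
      ¬ (G.Lambda {j} ⊆ G.srcSub i₁ Δ₁ ∪ G.srcSub i₂ Δ₂ ∪
          ⋃₀ {X : Set G.V | ∃ Δ ∈ I, (∀ i : Fin 3, G.S i ∉ Δ) ∧
                X = Δ ∩ G.regPair i₁ i₂})

/-- `I'` is obtained from `I` by merging two connected classes. -/
def IsContractionStep (I I' : Set (Set G.V)) : Prop :=
  ∃ Δ' Δ'', Δ' ∈ I ∧ Δ'' ∈ I ∧ Δ' ≠ Δ'' ∧ G.ClassesConnected Δ' Δ'' ∧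
    I' = insert (Δ' ∪ Δ'') (I \ {Δ', Δ''})

/-- The trivial partition of `Π` into singletons. -/
def trivialPartition : Set (Set G.V) := {X | ∃ R ∈ G.bigPi, X = {R}}

/-- `Ic` is a character partition of `Π`. -/
def IsCharacterPartition (Ic : Set (Set G.V)) : Prop :=
  ∃ (L : ℕ) (c : ℕ → Set (Set G.V)),
    c 0 = G.trivialPartition ∧ c L = Ic ∧
    (∀ ℓ < L, G.SourcesSeparated (c ℓ) ∧ G.IsContractionStep (c ℓ) (c (ℓ + 1))) ∧
    ((∃ Δ ∈ Ic, ∃ i j : Fin 3, i ≠ j ∧ G.S i ∈ Δ ∧ G.S j ∈ Δ) ∨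
      ∀ Δ' ∈ Ic, ∀ Δ'' ∈ Ic, Δ' ≠ Δ'' → ¬ G.ClassesConnected Δ' Δ'')

/-- Property (a): `d_{Q'} ∈ span{d_Q, ᾱ}` for all `Q, Q'` in the class `Δ`. -/
def PropertyA (F : Type) [Field F] (d : G.V → Fin 3 → F) (Δ : Set G.V) : Prop :=
  ∀ Q ∈ Δ, ∀ Q' ∈ Δ, d Q' ∈ Submodule.span F {d Q, fun _ => (1 : F)}

end RegionGraph

/-- Condition (C-IR) for a region graph with three terminals. -/
def RegionGraph.CIR (G : RegionGraph 3) : Prop :=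
  ∃ (σ τ : Equiv.Perm (Fin 3)) (P₁ P₂ : G.V),
    P₁ ∈ G.regO {G.S (σ 1), G.S (σ 2)} ∧
    P₂ ∈ G.regO {G.S (σ 0), G.S (σ 1)} ∧
    G.Lambda {τ 0} = {G.S (σ 0), P₁} ∧
    G.Lambda {τ 1} = {P₁, P₂} ∧
    G.Lambda {τ 2} ⊆ G.reg {G.S (σ 0), P₂} ∪ G.reg {G.S (σ 0), G.S (σ 2)}

/-!
Give every vertex `v` of `Π` a direction `c_v`, a vector modulo `ᾱ`, and let a vertex of
`reg(S_i, S_k)` carry the point `c_v - c_v(l) ᾱ` of the plane `x_l = 0`, where `{i, k, l}` is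
`{1, 2, 3}`. Every source lies in this plane unless its index is `l`, so these points are well
defined, and they form a code as soon as `c_v` is in the span of `ᾱ` and the directions of the
parents of `v`. Outside `Π`, separability lets every terminal `T_j` collect an arbitrary linear
combination of the vectors at `Λ_j`, so only `ᾱ ∈ span Λ_j` has to be arranged.

Directions are assigned through colours, in general position over a large prime field. Then `Λ_j`
spans `ᾱ` if it has two vertices of the same colour on different lines `reg(S_i, S_k)`, or two
colours on one line and a vertex off it, or one vertex on each line with three different colours;
in the last case the determinant of Ceva's theorem has to be nonzero, and Fermat numbers achieve
this. For condition (3), give all non-source vertices one new colour, and for condition (4) the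
colour of the source outside `{S_ℓ', S_ℓ''}`. For conditions (1) and (2), colour all vertices
differently, except that the two elements of each two-element `Λ_j` share a colour.
-/

section PathSum

open Relation

variable {V M : Type*} {r : V → V → Prop}

theorem eq_of_reaches_common_child (hr : Relator.RightUnique r) (hac : ∀ v, ¬ TransGen r v v)
    {Q P P' R : V} (hP : r P R) (hP' : r P' R) (hQP : ReflTransGen r Q P)
    (hQP' : ReflTransGen r Q P') : P = P' := by
  have eq_of_reaches : ∀ {A B}, r A R → r B R → ReflTransGen r A B → A = B := by
    intro A B hA hB hAB
    rcases hAB.cases_head with h | ⟨C, hAC, hCB⟩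
    · exact h
    · cases hr hA hAC
      exact absurd (TransGen.tail' hCB hB) (hac R)
  rcases ReflTransGen.total_of_right_unique hr hQP hQP' with h | h
  · exact eq_of_reaches hP hP' h
  · exact (eq_of_reaches hP' hP h).symm

variable [Fintype V] [AddCommMonoid M]

open Classical in
/-- The total weight of the vertices from which there is a directed `r`-path to `R`. -/
noncomputable def pathSum (r : V → V → Prop) (b : V → M) (R : V) : M :=
  ∑ Q with ReflTransGen r Q R, b Q

open Classical in
theorem pathSum_eq_add_sum (hr : Relator.RightUnique r) (hac : ∀ v, ¬ TransGen r v v)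
    (b : V → M) (R : V) : pathSum r b R = b R + ∑ P with r P R, pathSum r b P := by
  have hset : ({Q | ReflTransGen r Q R} : Finset V) =
      insert R (({P | r P R} : Finset V).biUnion fun P => {Q | ReflTransGen r Q P}) := by
    ext Q
    simp only [Finset.mem_filter_univ, Finset.mem_insert, Finset.mem_biUnion]
    rw [ReflTransGen.cases_tail_iff, eq_comm]
    exact or_congr_right (exists_congr fun P => and_comm)
  have hR : R ∉ ({P | r P R} : Finset V).biUnion fun P => {Q | ReflTransGen r Q P} := by
    simp only [Finset.mem_filter_univ, Finset.mem_biUnion, not_exists, not_and]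
    exact fun P hPR hRP => hac R (TransGen.tail' hRP hPR)
  have hdisj : Set.PairwiseDisjoint ↑({P | r P R} : Finset V)
      fun P => ({Q | ReflTransGen r Q P} : Finset V) := by
    intro P hP P' hP' hne
    refine Finset.disjoint_left.2 fun Q hQ hQ' => hne ?_
    simp only [Finset.coe_filter_univ, Set.mem_ofPred_eq, Finset.mem_filter_univ] at hP hP' hQ hQ'
    exact eq_of_reaches_common_child hr hac hP hP' hQ hQ'
  rw [pathSum, hset, Finset.sum_insert hR, Finset.sum_biUnion hdisj]
  rfl

end PathSum

namespace RegionGraph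

variable {n : ℕ} {G : RegionGraph n}

section Lines

variable (G) in
/-- The super region `reg(S_i, S_k)`, indexed by the third source index `l`. Codes map it into the
coordinate plane `x_l = 0`, a line of the projective plane. -/
def line (l : Fin 3) : Set G.V := G.reg (G.S '' {l}ᶜ)

theorem image_source_compl_singleton {i k l : Fin 3} (hik : i ≠ k) (hil : i ≠ l) (hkl : k ≠ l) :
    G.S '' {l}ᶜ = {G.S i, G.S k} := by
  rw [← Set.image_pair]
  congr 1
  ext m
  simp only [Set.mem_compl_iff, Set.mem_singleton_iff, Set.mem_insert_iff]
  omega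

theorem regPair_eq_line {i k l : Fin 3} (hik : i ≠ k) (hil : i ≠ l) (hkl : k ≠ l) :
    G.regPair i k = G.line l := by
  rw [regPair, line, image_source_compl_singleton hik hil hkl]

theorem mem_bigPi_iff {v : G.V} : v ∈ G.bigPi ↔ ∃ l, v ∈ G.line l := by
  rw [bigPi, regPair_eq_line (l := 2) (by decide) (by decide) (by decide),
    regPair_eq_line (l := 1) (by decide) (by decide) (by decide),
    regPair_eq_line (l := 0) (by decide) (by decide) (by decide)]
  simp only [Set.mem_union, Fin.exists_fin_succ, Fin.succ_zero_eq_one, IsEmpty.exists_iff, or_false]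
  exact or_comm.trans (or_congr_right or_comm)

theorem source_mem_line_iff {i l : Fin 3} : G.S i ∈ G.line l ↔ i ≠ l := by
  refine ⟨fun h => ?_, fun h => SuperReg.base ⟨i, h, rfl⟩⟩
  cases h with
  | base h => exact (G.S_inj.mem_set_image).1 h
  | step h _ => exact absurd h.choose_spec (G.source_no_parent _ _)

theorem exists_two_parents {v : G.V} (hv : v ∉ Set.range G.S) :
    ∃ p q, p ≠ q ∧ G.Adj p v ∧ G.Adj q v :=
  G.two_parents v fun i hi => hv ⟨i, hi.symm⟩

theorem parent_mem_line {v p : G.V} {l : Fin 3} (hv : v ∈ G.line l) (hp : G.Adj p v) :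
    p ∈ G.line l := by
  cases hv with
  | base h =>
    obtain ⟨i, _, rfl⟩ := h
    exact absurd hp (G.source_no_parent _ _)
  | step _ h => exact h p hp

theorem parent_mem_bigPi {v p : G.V} (hv : v ∈ G.bigPi) (hp : G.Adj p v) : p ∈ G.bigPi := by
  obtain ⟨l, hl⟩ := mem_bigPi_iff.1 hv
  exact mem_bigPi_iff.2 ⟨l, parent_mem_line hl hp⟩

theorem source_mem_bigPi (i : Fin 3) : G.S i ∈ G.bigPi :=
  mem_bigPi_iff.2 ⟨i + 1, source_mem_line_iff.2 (by revert i; decide)⟩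

theorem mem_range_of_mem_line_of_mem_line {v : G.V} {k l : Fin 3} (hkl : k ≠ l)
    (hk : v ∈ G.line k) (hl : v ∈ G.line l) : v ∈ Set.range G.S := by
  induction hk with
  | base h => exact Set.image_subset_range _ _ h
  | @step R _ hparents ih =>
    by_contra hR
    obtain ⟨p, q, hpq, hp, hq⟩ := exists_two_parents hR
    obtain ⟨i, rfl⟩ := ih p hp (parent_mem_line hl hp)
    obtain ⟨j, rfl⟩ := ih q hq (parent_mem_line hl hq)
    have hil := source_mem_line_iff.1 (parent_mem_line hl hp)
    have hjl := source_mem_line_iff.1 (parent_mem_line hl hq)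
    have hik := source_mem_line_iff.1 (hparents _ hp)
    have hjk := source_mem_line_iff.1 (hparents _ hq)
    have hij : i ≠ j := fun h => hpq (congrArg G.S h)
    omega

end Lines

section Separable

theorem wellFounded_transGen_adj (G : RegionGraph n) :
    WellFounded (Relation.TransGen G.Adj) := by
  have := G.fintypeV
  have : Std.Irrefl (Relation.TransGen G.Adj) := ⟨G.acyclic⟩
  exact Finite.wellFounded_of_trans_of_irrefl _

theorem wellFounded_flip_transGen_adj (G : RegionGraph n) :
    WellFounded (flip (Relation.TransGen G.Adj)) := by
  have := G.fintypeV
  have : Std.Irrefl (Relation.TransGen G.Adj) := ⟨G.acyclic⟩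
  have : IsTrans G.V (flip (Relation.TransGen G.Adj)) := ⟨fun _ _ _ h h' => h'.trans h⟩
  have : Std.Irrefl (flip (Relation.TransGen G.Adj)) := ⟨G.acyclic⟩
  exact Finite.wellFounded_of_trans_of_irrefl _

theorem reaches_of_mem_Omega {R : G.V} {j : Fin n} (hR : R ∈ G.Omega {j}) :
    G.Reaches R (G.T j) :=
  (hR.2 j).1 rfl

theorem eq_of_mem_Omega_of_reaches {R : G.V} {j k : Fin n} (hR : R ∈ G.Omega {j})
    (hk : G.Reaches R (G.T k)) : k = j :=
  (hR.2 k).2 hk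

theorem mem_Omega_of_reaches (hTS : G.TerminalSeparable) {R : G.V} {j : Fin n}
    (hR : R ∉ G.bigPi) (hj : G.Reaches R (G.T j)) : R ∈ G.Omega {j} := by
  have hmem : R ∈ G.Omega {k | G.Reaches R (G.T k)} := ⟨hR, fun _ => Iff.rfl⟩
  have hcard : {k | G.Reaches R (G.T k)}.ncard ≤ 1 := by
    by_contra! h
    rw [hTS _ h] at hmem
    exact hmem
  have hset : {k | G.Reaches R (G.T k)} = {j} :=
    Set.eq_singleton_iff_unique_mem.2 ⟨hj, fun k hk => (Set.ncard_le_one_iff).1 hcard hk hj⟩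
  rwa [hset] at hmem

theorem terminal_mem_Omega (hA : G.Assumption1) (hTS : G.TerminalSeparable) (j : Fin n) :
    G.T j ∈ G.Omega {j} :=
  mem_Omega_of_reaches hTS (hA j) .refl

theorem exists_child_mem_Omega (hTS : G.TerminalSeparable) {P : G.V} {j : Fin n}
    (hP : P ∈ G.Omega {j}) (hne : P ≠ G.T j) : ∃ R ∈ G.Omega {j}, G.Adj P R := by
  rcases (reaches_of_mem_Omega hP).cases_head with h | ⟨R, hPR, hR⟩
  · exact absurd h hne
  · exact ⟨R, mem_Omega_of_reaches hTS (fun h => hP.1 (parent_mem_bigPi h hPR)) hR, hPR⟩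

theorem exists_mem_Lambda_notMem_line (hA : G.Assumption1) (hTS : G.TerminalSeparable)
    (j : Fin n) (l : Fin 3) : ∃ v ∈ G.Lambda {j}, v ∉ G.line l := by
  by_contra! hΛ
  suffices hΩ : ∀ R, R ∉ G.Omega {j} from hΩ _ (terminal_mem_Omega hA hTS j)
  intro R
  induction R using G.wellFounded_transGen_adj.induction with
  | _ R ih =>
    intro hR
    have hsource : R ∉ Set.range G.S := by
      rintro ⟨i, rfl⟩
      exact hR.1 (source_mem_bigPi i)
    obtain ⟨p, _, _, hp, _⟩ := exists_two_parents hsource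
    refine hR.1 (mem_bigPi_iff.2 ⟨l, SuperReg.step ⟨p, hp⟩ fun P hP => ?_⟩)
    by_cases hPpi : P ∈ G.bigPi
    · exact hΛ P ⟨hPpi, R, hP, hR⟩
    · exact absurd (mem_Omega_of_reaches hTS hPpi (.head hP (reaches_of_mem_Omega hR)))
        (ih P (.single hP))

end Separable

section FeasibilityCriterion

open Relation

theorem exists_routing (hA : G.Assumption1) (hTS : G.TerminalSeparable) :
    ∃ r : G.V → G.V → Prop, Relator.RightUnique r ∧ (∀ P R, r P R → G.Adj P R ∧ P ∉ G.bigPi) ∧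
      ∀ j Q, ReflTransGen r Q (G.T j) ↔ Q ∈ G.Omega {j} := by
  have hnext : ∀ P : G.V, ∃ R, ∀ j, P ∈ G.Omega {j} → P ≠ G.T j →
      R ∈ G.Omega {j} ∧ G.Adj P R := by
    intro P
    by_cases h : ∃ j, P ∈ G.Omega {j} ∧ P ≠ G.T j
    · obtain ⟨j, hP, hne⟩ := h
      obtain ⟨R, hR⟩ := exists_child_mem_Omega hTS hP hne
      refine ⟨R, fun k hk _ => ?_⟩
      rwa [eq_of_mem_Omega_of_reaches hP (reaches_of_mem_Omega hk)]
    · exact ⟨P, fun j hP hne => absurd ⟨j, hP, hne⟩ h⟩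
  choose next hnext using hnext
  let r : G.V → G.V → Prop := fun P R => next P = R ∧ ∃ j, P ∈ G.Omega {j} ∧ P ≠ G.T j
  have hr : ∀ P R, r P R → G.Adj P R ∧ P ∉ G.bigPi := by
    rintro P _ ⟨rfl, j, hP, hne⟩
    exact ⟨(hnext P j hP hne).2, hP.1⟩
  refine ⟨r, fun P R R' h h' => h.1.symm.trans h'.1, hr, fun j Q => ⟨fun h => ?_, ?_⟩⟩
  · have hreach : G.Reaches Q (G.T j) := ReflTransGen.mono (fun P R hPR => (hr P R hPR).1) _ _ h
    rcases h.cases_head with rfl | ⟨R, hQR, _⟩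
    · exact terminal_mem_Omega hA hTS j
    · exact mem_Omega_of_reaches hTS (hr Q R hQR).2 hreach
  · induction Q using G.wellFounded_flip_transGen_adj.induction with
    | _ Q ih =>
      intro hQ
      by_cases hne : Q = G.T j
      · rw [hne]
      · obtain ⟨hmem, hadj⟩ := hnext Q j hQ hne
        exact .head ⟨rfl, j, hQ, hne⟩ (ih _ (.single hadj) hmem)

open Classical in
theorem exists_injection_of_mem_span_Lambda [Fintype G.V] {F M : Type*} [Field F]
    [AddCommGroup M] [Module F M] {d : G.V → M} {x : M} {j : Fin n}
    (hx : x ∈ Submodule.span F (d '' G.Lambda {j})) :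
    ∃ b : G.V → M, (∀ R, b R ∈ Submodule.span F (d '' {P | P ∈ G.bigPi ∧ G.Adj P R})) ∧
      ∑ R with R ∈ G.Omega {j}, b R = x := by
  have hle : Submodule.span F (d '' G.Lambda {j}) ≤
      ⨆ R ∈ ({R | R ∈ G.Omega {j}} : Finset G.V),
        Submodule.span F (d '' {P | P ∈ G.bigPi ∧ G.Adj P R}) := by
    rw [Submodule.span_le]
    rintro _ ⟨P, ⟨hP, R, hPR, hR⟩, rfl⟩
    exact Submodule.mem_iSup_of_mem R (Submodule.mem_iSup_of_mem (by simpa using hR)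
      (Submodule.subset_span ⟨P, ⟨hP, hPR⟩, rfl⟩))
  obtain ⟨b, hb⟩ := (Submodule.mem_iSup_finset_iff_exists_sum _ x).1 (hle hx)
  exact ⟨fun R => b R, fun R => (b R).2, hb⟩

open Classical in
theorem exists_injection_of_conds123 [Fintype G.V] {F : Type} [Field F] {d : G.V → Fin 3 → F}
    (h : G.Conds123 F d) :
    ∃ b : G.V → Fin 3 → F,
      (∀ R, b R ∈ Submodule.span F (d '' {P | P ∈ G.bigPi ∧ G.Adj P R})) ∧
      ∀ j, ∑ R with R ∈ G.Omega {j}, b R = fun _ => 1 := by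
  choose b hb hsum using fun j => exists_injection_of_mem_span_Lambda (h.2.2 j)
  refine ⟨fun R => ∑ j with R ∈ G.Omega {j}, b j R,
    fun R => Submodule.sum_mem _ fun j _ => hb j R, fun j => ?_⟩
  rw [← hsum j]
  refine Finset.sum_congr rfl fun R hR => ?_
  have hRj : R ∈ G.Omega {j} := by simpa using hR
  have honly : ({k | R ∈ G.Omega {k}} : Finset (Fin n)) = {j} := by
    ext k
    simp only [Finset.mem_filter_univ, Finset.mem_singleton]
    exact ⟨fun hk => eq_of_mem_Omega_of_reaches hRj (reaches_of_mem_Omega hk),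
      fun hk => hk ▸ hRj⟩
  change ∑ k with R ∈ G.Omega {k}, b k R = b j R
  rw [honly, Finset.sum_singleton]

theorem feasible_of_conds123 (hA : G.Assumption1) (hTS : G.TerminalSeparable) {F : Type}
    [Field F] [Finite F] {d : G.V → Fin 3 → F} (h : G.Conds123 F d) : G.Feasible := by
  classical
  have := G.fintypeV
  obtain ⟨b, hb, hsum⟩ := exists_injection_of_conds123 h
  obtain ⟨r, hr, hrAdj, hrT⟩ := exists_routing hA hTS
  have hac : ∀ v, ¬ TransGen r v v := fun v hv =>
    G.acyclic v (TransGen.mono (fun P R hPR => (hrAdj P R hPR).1) _ _ hv)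
  let e : G.V → Fin 3 → F := fun R => if R ∈ G.bigPi then d R else pathSum r b R
  have he : ∀ R ∈ G.bigPi, e R = d R := fun R hR => if_pos hR
  have he' : ∀ R ∉ G.bigPi, e R = pathSum r b R := fun R hR => if_neg hR
  refine ⟨F, inferInstance, Fintype.ofFinite F, e, ⟨fun i => ?_, fun R hR => ?_⟩, fun j => ?_⟩
  · rw [he _ (source_mem_bigPi i), h.1]
  · by_cases hRpi : R ∈ G.bigPi
    · have hparents : e '' {P | G.Adj P R} = d '' {P | G.Adj P R} :=
        Set.image_congr fun P hP => he P (parent_mem_bigPi hRpi hP)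
      rw [he R hRpi, hparents]
      exact h.2.1 R hRpi hR
    · rw [he' R hRpi, pathSum_eq_add_sum hr hac]
      refine Submodule.add_mem _ (Submodule.span_mono ?_ (hb R)) (Submodule.sum_mem _ ?_)
      · rintro _ ⟨P, ⟨hPpi, hP⟩, rfl⟩
        exact ⟨P, hP, he P hPpi⟩
      · intro P hP
        obtain ⟨hPR, hPpi⟩ := hrAdj P R (by simpa using hP)
        exact Submodule.subset_span ⟨P, hPR, he' P hPpi⟩
  · rw [he' _ (hA j), ← hsum j, pathSum]
    simp only [hrT]

end FeasibilityCriterion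

end RegionGraph

section PlaneProjection

variable {R : Type*} [CommRing R]

/-- The projection of `R³` along `ᾱ` onto the coordinate plane `x_l = 0`. -/
def planeProj (l : Fin 3) : (Fin 3 → R) →ₗ[R] (Fin 3 → R) :=
  LinearMap.id - (LinearMap.proj l).smulRight 1

theorem planeProj_apply (l : Fin 3) (x : Fin 3 → R) : planeProj l x = x - x l • 1 := rfl

theorem planeProj_one (l : Fin 3) : planeProj l (1 : Fin 3 → R) = 0 := by
  rw [planeProj_apply, Pi.one_apply, one_smul, sub_self]

theorem planeProj_single_one {i l : Fin 3} (h : l ≠ i) :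
    planeProj l (Pi.single i (1 : R)) = Pi.single i 1 := by
  rw [planeProj_apply, Pi.single_eq_of_ne h, zero_smul, sub_zero]

theorem map_comp_planeProj {R' : Type*} [CommRing R'] (f : R →+* R') (l : Fin 3)
    (x : Fin 3 → R) : f ∘ planeProj l x = planeProj l (f ∘ x) := by
  ext i
  simp [planeProj_apply]

variable {F : Type*} [Field F]

theorem one_mem_span_planeProj_of_ne {x : Fin 3 → F} {k l : Fin 3} (h : x l ≠ x k) :
    1 ∈ Submodule.span F {planeProj l x, planeProj k x} := by
  refine Submodule.mem_span_pair.2 ⟨(x k - x l)⁻¹, -(x k - x l)⁻¹, ?_⟩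
  have hdiff : planeProj l x - planeProj k x = (x k - x l) • 1 := by
    rw [planeProj_apply, planeProj_apply]
    module
  rw [neg_smul, ← sub_eq_add_neg, ← smul_sub, hdiff, inv_smul_smul₀ (sub_ne_zero.2 h.symm)]

theorem one_mem_span_planeProj_of_span_eq_top {x y z : Fin 3 → F} {l : Fin 3}
    (hxy : Submodule.span F {x, y, 1} = ⊤) (hz : z l ≠ 0) :
    1 ∈ Submodule.span F {planeProj l x, planeProj l y, z} := by
  have hproj : planeProj l z ∈ Submodule.span F {planeProj l x, planeProj l y, z} := by
    have hmem : planeProj l z ∈ (Submodule.span F {x, y, 1}).map (planeProj l) :=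
      Submodule.mem_map_of_mem (hxy ▸ Submodule.mem_top)
    rw [Submodule.map_span, Set.image_insert_eq, Set.image_pair, planeProj_one] at hmem
    refine Submodule.span_le.2 ?_ hmem
    rintro _ (rfl | rfl | rfl)
    · exact Submodule.subset_span (by simp)
    · exact Submodule.subset_span (by simp)
    · exact Submodule.zero_mem _
  have hone : (1 : Fin 3 → F) = (z l)⁻¹ • (z - planeProj l z) := by
    rw [planeProj_apply, sub_sub_cancel, inv_smul_smul₀ hz]
  rw [hone]
  exact Submodule.smul_mem _ _ (Submodule.sub_mem _ (Submodule.subset_span (by simp)) hproj)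

theorem apply_ne_of_span_single_eq_top {x : Fin 3 → F} {k l m : Fin 3} (hkl : k ≠ l)
    (hkm : k ≠ m) (hlm : l ≠ m) (hx : Submodule.span F {x, Pi.single m 1, 1} = ⊤) :
    x l ≠ x k := by
  intro hlk
  have hproj : LinearMap.proj l = (LinearMap.proj k : (Fin 3 → F) →ₗ[F] F) := by
    refine LinearMap.ext_on hx ?_
    rintro _ (rfl | rfl | rfl)
    · exact hlk
    · simp [hkm, hlm]
    · rfl
  have := LinearMap.congr_fun hproj (Pi.single k 1)
  simp [hkl.symm] at this

end PlaneProjection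

section Directions

/-- Colours of the vertices: the colours of the three sources, and a reservoir of further ones. -/
abbrev Color : Type := Fin 3 ⊕ ℕ

/-- The vector whose line through `ᾱ` carries the code vectors of a given colour. Fermat numbers
are odd, at least `3` and pairwise coprime, which puts these vectors in general position. -/
def direction (R : Type*) [CommRing R] : Color → Fin 3 → R
  | .inl i => Pi.single i 1
  | .inr t => ![0, 1, (t.fermatNumber : R)]

theorem map_comp_direction {R R' : Type*} [CommRing R] [CommRing R'] (f : R →+* R') (a : Color) :
    f ∘ direction R a = direction R' a := by
  ext i
  rcases a with k | t
  · simp [direction, Pi.single_apply, apply_ite f]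
  · fin_cases i <;> simp [direction]

/-- A choice of one colour for each of the three lines, pairwise distinct and such that the only
source colour allowed on the line `l` is that of the source off this line. -/
def IsTriangle (f : Fin 3 → Color) : Prop :=
  Function.Injective f ∧ ∀ i m, f i = .inl m → m = i

theorem three_le_cast_fermatNumber (t : ℕ) : (3 : ℤ) ≤ t.fermatNumber :=
  mod_cast Nat.three_le_fermatNumber t

theorem det_direction_ne_zero {a b : Color} (hab : a ≠ b) :
    (Matrix.of ![direction ℤ a, direction ℤ b, 1]).det ≠ 0 := by
  rw [Matrix.det_fin_three]
  rcases a with i | s <;> rcases b with j | t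
  · fin_cases i <;> fin_cases j <;> simp_all [direction]
  · have := three_le_cast_fermatNumber t
    fin_cases i <;> simp [direction] <;> omega
  · have := three_le_cast_fermatNumber s
    fin_cases j <;> simp [direction] <;> omega
  · have hst : s.fermatNumber ≠ t.fermatNumber :=
      fun h => hab (congrArg _ (Nat.fermatNumber_injective h))
    simpa [direction, sub_eq_zero] using hst.symm

theorem det_planeProj {R : Type*} [CommRing R] (x : Fin 3 → Fin 3 → R) :
    (Matrix.of fun i => planeProj i (x i)).det =
      (x 0 1 - x 0 0) * (x 1 2 - x 1 1) * (x 2 0 - x 2 2) +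
        (x 0 2 - x 0 0) * (x 1 0 - x 1 1) * (x 2 1 - x 2 2) := by
  simp only [Matrix.det_fin_three, Matrix.of_apply, planeProj_apply, Pi.sub_apply, Pi.smul_apply,
    Pi.one_apply, smul_eq_mul]
  ring

theorem not_fermatNumber_dvd_fermatNumber {s t : ℕ} (hst : s ≠ t) :
    ¬ (s.fermatNumber : ℤ) ∣ t.fermatNumber := by
  exact fun h => Nat.fermatNumber_ne_one s <|
    (Nat.coprime_fermatNumber_fermatNumber hst).eq_one_of_dvd (Int.natCast_dvd_natCast.1 h)

theorem det_planeProj_direction_ne_zero {f : Fin 3 → Color} (hf : IsTriangle f) :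
    (Matrix.of fun i => planeProj i (direction ℤ (f i))).det ≠ 0 := by
  intro hdet
  rw [det_planeProj] at hdet
  have hodd (t : ℕ) : (t.fermatNumber : ℤ) % 2 = 1 :=
    Int.odd_iff.1 (mod_cast Nat.odd_fermatNumber t)
  have hthree := three_le_cast_fermatNumber
  -- The eight goals are the choices of the lines that get a source colour.
  rcases h₀ : f 0 with i | r <;> rcases h₁ : f 1 with j | s <;> rcases h₂ : f 2 with k | t <;>
    (try cases hf.2 0 _ h₀) <;> (try cases hf.2 1 _ h₁) <;> (try cases hf.2 2 _ h₂) <;>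
    simp only [h₀, h₁, h₂, direction, Pi.single_apply, Fin.reduceEq, if_true, if_false,
      Matrix.cons_val] at hdet
  · grind
  · grind
  · grind
  · have hdvd : (t.fermatNumber : ℤ) ∣ 1 := ⟨2 - s.fermatNumber, by linarith⟩
    exact absurd (Int.le_of_dvd one_pos hdvd) (by grind)
  · grind
  · nlinarith [three_le_cast_fermatNumber r, three_le_cast_fermatNumber t]
  · grind
  · have hrt : r ≠ t := by
      rintro rfl
      exact absurd (hf.1 (h₀.trans h₂.symm)) (by decide)
    exact not_fermatNumber_dvd_fermatNumber hrt.symm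
      ⟨r.fermatNumber - s.fermatNumber + 1, by linarith⟩

theorem exists_prime_forall_span_row_eq_top {ι m : Type*} [Finite ι] [Fintype m] [DecidableEq m]
    (M : ι → Matrix m m ℤ) (hM : ∀ i, (M i).det ≠ 0) :
    ∃ p, p.Prime ∧ ∀ i,
      Submodule.span (ZMod p) (Set.range ((M i).map (Int.castRingHom (ZMod p))).row) = ⊤ := by
  have := Fintype.ofFinite ι
  obtain ⟨p, hp, hprime⟩ := Nat.exists_infinite_primes ((∏ i, (M i).det).natAbs + 1)
  have := Fact.mk hprime
  refine ⟨p, hprime, fun i => ?_⟩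
  have hdet : ((M i).map (Int.castRingHom (ZMod p))).det ≠ 0 := by
    rw [← RingHom.mapMatrix_apply, ← RingHom.map_det, eq_intCast, Ne,
      ZMod.intCast_zmod_eq_zero_iff_dvd]
    intro hdvd
    have hdvd_prod := hdvd.trans
      (Finset.dvd_prod_of_mem (fun i => (M i).det) (Finset.mem_univ i))
    have hle := Int.natAbs_le_of_dvd_ne_zero hdvd_prod (Finset.prod_ne_zero_iff.2 fun i _ => hM i)
    omega
  have hrows := Matrix.linearIndependent_rows_iff_isUnit.2
    ((Matrix.isUnit_iff_isUnit_det _).2 hdet.isUnit)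
  exact hrows.span_eq_top_of_card_eq_finrank' (Module.finrank_fintype_fun_eq_card _).symm

theorem exists_prime_directions_in_general_position {V : Type*} [Finite V] (χ : V → Color) :
    ∃ p, p.Prime ∧
      (∀ u v, χ u ≠ χ v → Submodule.span (ZMod p)
        {direction (ZMod p) (χ u), direction (ZMod p) (χ v), 1} = ⊤) ∧
      ∀ f : Fin 3 → V, IsTriangle (χ ∘ f) → Submodule.span (ZMod p)
        (Set.range fun i => planeProj i (direction (ZMod p) (χ (f i)))) = ⊤ := by
  let M : {e : V × V // χ e.1 ≠ χ e.2} ⊕ {f : Fin 3 → V // IsTriangle (χ ∘ f)} →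
      Matrix (Fin 3) (Fin 3) ℤ :=
    Sum.elim (fun e => .of ![direction ℤ (χ e.1.1), direction ℤ (χ e.1.2), 1])
      fun f => .of fun i => planeProj i (direction ℤ (χ (f.1 i)))
  obtain ⟨p, hp, hspan⟩ := exists_prime_forall_span_row_eq_top M <| by
    rintro (e | f)
    · exact det_direction_ne_zero e.2
    · exact det_planeProj_direction_ne_zero f.2
  refine ⟨p, hp, fun u v huv => ?_, fun f hf => ?_⟩
  · have hrows : ((M (.inl ⟨(u, v), huv⟩)).map (Int.castRingHom (ZMod p))).row =
        ![direction (ZMod p) (χ u), direction (ZMod p) (χ v), 1] := by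
      rw [← map_comp_direction (Int.castRingHom (ZMod p)),
        ← map_comp_direction (Int.castRingHom (ZMod p))]
      ext i k
      fin_cases i <;> simp [M]
    have hset : Set.range ![direction (ZMod p) (χ u), direction (ZMod p) (χ v), 1] =
        {direction (ZMod p) (χ u), direction (ZMod p) (χ v), 1} := by
      simp only [Matrix.range_cons, Matrix.range_empty, Set.union_empty, Set.singleton_union]
    rw [← hset, ← hrows]
    exact hspan _
  · have hrows : ((M (.inr ⟨f, hf⟩)).map (Int.castRingHom (ZMod p))).row =
        fun i => planeProj i (direction (ZMod p) (χ (f i))) := by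
      funext i
      rw [← map_comp_direction (Int.castRingHom (ZMod p)), ← map_comp_planeProj]
      rfl
    exact hrows ▸ hspan (.inr ⟨f, hf⟩)

end Directions

namespace RegionGraph

variable {n : ℕ} {G : RegionGraph n}

section Coloring

theorem planeProj_eq_of_mem_line {F : Type*} [Field F] {c : G.V → Fin 3 → F}
    (hS : ∀ i, c (G.S i) = Pi.single i 1) {v : G.V} {k l : Fin 3} (hk : v ∈ G.line k)
    (hl : v ∈ G.line l) : planeProj k (c v) = planeProj l (c v) := by
  rcases eq_or_ne k l with rfl | hkl
  · rfl
  · obtain ⟨i, rfl⟩ := mem_range_of_mem_line_of_mem_line hkl hk hl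
    rw [hS, planeProj_single_one (source_mem_line_iff.1 hk).symm,
      planeProj_single_one (source_mem_line_iff.1 hl).symm]

theorem feasible_of_directions (hA : G.Assumption1) (hTS : G.TerminalSeparable) {F : Type}
    [Field F] [Finite F] {c : G.V → Fin 3 → F} (hS : ∀ i, c (G.S i) = Pi.single i 1)
    (hcode : ∀ v ∈ G.bigPi, v ∉ Set.range G.S →
      c v ∈ Submodule.span F (insert 1 (c '' {p | G.Adj p v})))
    (hdecode : ∀ j, 1 ∈ Submodule.span F
      (⋃ l, (fun v => planeProj l (c v)) '' (G.Lambda {j} ∩ G.line l))) : G.Feasible := by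
  choose! lineOf hlineOf using fun v (hv : v ∈ G.bigPi) => mem_bigPi_iff.1 hv
  let d : G.V → Fin 3 → F := fun v => planeProj (lineOf v) (c v)
  have hd {v l} (hv : v ∈ G.line l) : d v = planeProj l (c v) :=
    planeProj_eq_of_mem_line hS (hlineOf v (mem_bigPi_iff.2 ⟨l, hv⟩)) hv
  refine feasible_of_conds123 hA hTS (d := d) ⟨fun i => ?_, fun v hv hsource => ?_, fun j => ?_⟩
  · obtain ⟨l, hl⟩ := mem_bigPi_iff.1 (G.source_mem_bigPi i)
    rw [hd hl, hS, planeProj_single_one (source_mem_line_iff.1 hl).symm]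
  · obtain ⟨l, hl⟩ := mem_bigPi_iff.1 hv
    have hmem := Submodule.mem_map_of_mem (f := planeProj l)
      (hcode v hv fun ⟨i, hi⟩ => hsource i hi.symm)
    rw [Submodule.map_span, Set.image_insert_eq, planeProj_one, Submodule.span_insert_zero,
      Set.image_image, ← hd hl] at hmem
    have hparents : d '' {p | G.Adj p v} = (fun p => planeProj l (c p)) '' {p | G.Adj p v} :=
      Set.image_congr fun p hp => hd (parent_mem_line hl hp)
    rwa [hparents]
  · refine Submodule.span_mono ?_ (hdecode j)
    rintro _ ⟨_, ⟨l, rfl⟩, v, ⟨hv, hl⟩, rfl⟩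
    exact ⟨v, hv, hd hl⟩

/-- A way of recovering `ᾱ` from the code vectors of `A` when every vertex gets the direction of its
colour under `χ`: two different vectors of the same colour, a full line and a vector off it, or
three vectors in general position. -/
inductive Decodable (χ : G.V → Color) (A : Set G.V) : Prop
  | same {u v : G.V} {k l m : Fin 3} (hkl : k ≠ l) (hkm : k ≠ m) (hlm : l ≠ m)
      (hu : u ∈ A ∩ G.line k) (hv : v ∈ A ∩ G.line l) (huv : χ u = χ v) (hum : χ u ≠ .inl m)
  | line {u v w : G.V} {k l m : Fin 3} (hkl : k ≠ l) (hkm : k ≠ m) (hlm : l ≠ m)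
      (hu : u ∈ A ∩ G.line l) (hv : v ∈ A ∩ G.line l) (huv : χ u ≠ χ v)
      (hw : w ∈ A ∩ G.line k) (hwm : χ w ≠ .inl m)
  | triangle {f : Fin 3 → G.V} (hf : ∀ i, f i ∈ A ∩ G.line i) (htri : IsTriangle (χ ∘ f))

theorem Decodable.one_mem_span {χ : G.V → Color} {A : Set G.V} (hA : Decodable χ A)
    (hS : ∀ i, χ (G.S i) = .inl i) {F : Type*} [Field F]
    (hpair : ∀ u v, χ u ≠ χ v →
      Submodule.span F {direction F (χ u), direction F (χ v), 1} = ⊤)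
    (htriple : ∀ f : Fin 3 → G.V, IsTriangle (χ ∘ f) →
      Submodule.span F (Set.range fun i => planeProj i (direction F (χ (f i)))) = ⊤) :
    1 ∈ Submodule.span F
      (⋃ l, (fun v => planeProj l (direction F (χ v))) '' (A ∩ G.line l)) := by
  set B := ⋃ l, (fun v => planeProj l (direction F (χ v))) '' (A ∩ G.line l)
  have hmem {v l} (hv : v ∈ A ∩ G.line l) : planeProj l (direction F (χ v)) ∈ B :=
    Set.mem_iUnion.2 ⟨l, v, hv, rfl⟩
  have happly {v k l m} (hkl : k ≠ l) (hkm : k ≠ m) (hlm : l ≠ m) (hv : χ v ≠ .inl m) :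
      direction F (χ v) l ≠ direction F (χ v) k := by
    have htop := hpair v (G.S m) (hS m ▸ hv)
    rw [hS] at htop
    exact apply_ne_of_span_single_eq_top hkl hkm hlm htop
  cases hA with
  | same hkl hkm hlm hu hv huv hum =>
    refine Submodule.span_mono ?_ (one_mem_span_planeProj_of_ne (happly hkl hkm hlm hum))
    rintro _ (rfl | rfl)
    exacts [huv ▸ hmem hv, hmem hu]
  | @line u v w k l m hkl hkm hlm hu hv huv hw hwm =>
    have hoff : planeProj k (direction F (χ w)) l ≠ 0 := by
      rw [planeProj_apply, Pi.sub_apply, Pi.smul_apply, Pi.one_apply, smul_eq_mul, mul_one]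
      exact sub_ne_zero.2 (happly hkl hkm hlm hwm)
    refine Submodule.span_mono ?_ (one_mem_span_planeProj_of_span_eq_top (hpair _ _ huv) hoff)
    rintro _ (rfl | rfl | rfl)
    exacts [hmem hu, hmem hv, hmem hw]
  | triangle hf htri =>
    have hle : Submodule.span F (Set.range fun i => _) ≤ Submodule.span F B :=
      Submodule.span_mono (Set.range_subset_iff.2 fun i => hmem (hf i))
    exact hle (htriple _ htri ▸ Submodule.mem_top)

theorem feasible_of_coloring (hA : G.Assumption1) (hTS : G.TerminalSeparable)
    {χ : G.V → Color} (hS : ∀ i, χ (G.S i) = .inl i)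
    (hcode : ∀ v ∈ G.bigPi, v ∉ Set.range G.S →
      (∃ p, G.Adj p v ∧ χ p = χ v) ∨ ∃ p q, G.Adj p v ∧ G.Adj q v ∧ χ p ≠ χ q)
    (hdecode : ∀ j, Decodable χ (G.Lambda {j})) : G.Feasible := by
  have := G.fintypeV
  obtain ⟨p, hp, hpair, htriple⟩ := exists_prime_directions_in_general_position χ
  have := Fact.mk hp
  refine feasible_of_directions hA hTS (c := fun v => direction (ZMod p) (χ v))
    (fun i => congrArg _ (hS i)) (fun v hv hsource => ?_)
    fun j => (hdecode j).one_mem_span hS hpair htriple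
  rcases hcode v hv hsource with ⟨u, hu, huv⟩ | ⟨u, w, hu, hw, huw⟩
  · exact Submodule.subset_span (.inr ⟨u, hu, congrArg _ huv⟩)
  · have hsub : {direction (ZMod p) (χ u), direction (ZMod p) (χ w), 1} ⊆
        insert 1 ((fun v => direction (ZMod p) (χ v)) '' {p | G.Adj p v}) := by
      rintro _ (rfl | rfl | rfl)
      · exact .inr ⟨u, hu, rfl⟩
      · exact .inr ⟨w, hw, rfl⟩
      · exact .inl rfl
    exact Submodule.span_mono hsub (hpair u w huw ▸ Submodule.mem_top)

end Coloring

section ConstantColoring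

variable (G) in
/-- The colouring in which the sources have their own colours and all other vertices have colour
`a`. -/
noncomputable def constantColoring (a : Color) : G.V → Color :=
  Function.extend G.S Sum.inl fun _ => a

theorem constantColoring_source (a : Color) (i : Fin 3) :
    G.constantColoring a (G.S i) = .inl i :=
  G.S_inj.extend_apply _ _ _

theorem constantColoring_of_notMem_range {a : Color} {v : G.V} (hv : v ∉ Set.range G.S) :
    G.constantColoring a v = a :=
  Function.extend_apply' _ _ _ hv

theorem feasible_of_constantColoring (hA : G.Assumption1) (hTS : G.TerminalSeparable) (a : Color)
    (h : ∀ j, ∃ l, (∀ m, l ≠ m → a ≠ .inl m) ∧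
      (∃ u ∈ G.Lambda {j}, u ∈ G.line l ∧ G.constantColoring a u = a) ∧
      ∀ v ∈ G.Lambda {j}, v ∉ G.line l → G.constantColoring a v = a) :
    G.Feasible := by
  refine feasible_of_coloring hA hTS (constantColoring_source a) (fun v _ hv => ?_) fun j => ?_
  · obtain ⟨p, q, hpq, hp, hq⟩ := exists_two_parents hv
    rw [constantColoring_of_notMem_range hv]
    by_cases hps : p ∈ Set.range G.S
    · by_cases hqs : q ∈ Set.range G.S
      · obtain ⟨⟨i, rfl⟩, ⟨k, rfl⟩⟩ := hps, hqs
        refine .inr ⟨_, _, hp, hq, fun hik => hpq ?_⟩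
        rw [constantColoring_source, constantColoring_source] at hik
        exact congrArg G.S (Sum.inl_injective hik)
      · exact .inl ⟨q, hq, constantColoring_of_notMem_range hqs⟩
    · exact .inl ⟨p, hp, constantColoring_of_notMem_range hps⟩
  · obtain ⟨l, ha, ⟨u, hu, hul, hua⟩, hv⟩ := h j
    obtain ⟨v, hvΛ, hvl⟩ := exists_mem_Lambda_notMem_line hA hTS j l
    obtain ⟨k, hvk⟩ := mem_bigPi_iff.1 hvΛ.1
    have hlk : l ≠ k := fun h => hvl (h ▸ hvk)
    obtain ⟨m, hml, hmk⟩ := Fin.exists_ne_and_ne_of_two_lt l k (by decide)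
    exact .same hlk hml.symm hmk.symm ⟨hu, hul⟩ ⟨hvΛ, hvk⟩ (hua.trans (hv v hvΛ hvl).symm)
      fun hum => ha m hml.symm (hua.symm.trans hum)

theorem feasible_of_source_notMem_Lambda (hA : G.Assumption1) (hTS : G.TerminalSeparable)
    (h : ∀ i j, G.S i ∉ G.Lambda {j}) : G.Feasible := by
  refine feasible_of_constantColoring hA hTS (.inr 0) fun j => ?_
  have hconst : ∀ v ∈ G.Lambda {j}, G.constantColoring (.inr 0) v = .inr 0 := by
    refine fun v hv => constantColoring_of_notMem_range ?_
    rintro ⟨i, rfl⟩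
    exact h i j hv
  obtain ⟨u, hu, _⟩ := exists_mem_Lambda_notMem_line hA hTS j 0
  obtain ⟨l, hl⟩ := mem_bigPi_iff.1 hu.1
  exact ⟨l, fun _ _ => Sum.inr_ne_inl, ⟨u, hu, hl, hconst u hu⟩, fun v hv _ => hconst v hv⟩

theorem feasible_of_Lambda_inter_regO_nonempty (hA : G.Assumption1) (hTS : G.TerminalSeparable)
    {l l' : Fin 3} (hll' : l ≠ l')
    (h : ∀ j, (G.Lambda {j} ∩ G.regO {G.S l, G.S l'}).Nonempty) : G.Feasible := by
  obtain ⟨m, hml, hml'⟩ := Fin.exists_ne_and_ne_of_two_lt l l' (by decide)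
  refine feasible_of_constantColoring hA hTS (.inl m) fun j =>
    ⟨m, fun _ hm => Sum.inl_injective.ne hm, ?_, fun v _ hvm => ?_⟩
  · obtain ⟨u, hu, hul, hsource⟩ := h j
    rw [← image_source_compl_singleton hll' hml.symm hml'.symm] at hul hsource
    refine ⟨u, hu, hul, constantColoring_of_notMem_range ?_⟩
    rintro ⟨i, rfl⟩
    exact hsource ⟨i, source_mem_line_iff.1 hul, rfl⟩
  · by_cases hv : v ∈ Set.range G.S
    · obtain ⟨i, rfl⟩ := hv
      rw [constantColoring_source, not_ne_iff.1 (mt source_mem_line_iff.2 hvm)]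
    · exact constantColoring_of_notMem_range hv

end ConstantColoring

section InjectiveOnLines

theorem exists_apply_eq_iff_of_pairwiseDisjoint {α : Type*} {𝒜 : Set (Set α)}
    (h𝒜 : 𝒜.PairwiseDisjoint id) :
    ∃ f : α → Set α, ∀ u v, f u = f v ↔ u = v ∨ ∃ A ∈ 𝒜, u ∈ A ∧ v ∈ A := by
  refine ⟨fun v => insert v (⋃₀ {A ∈ 𝒜 | v ∈ A}), fun u v => ⟨fun huv => ?_, ?_⟩⟩
  · have hv : v ∈ insert u (⋃₀ {A ∈ 𝒜 | u ∈ A}) := huv.superset (Set.mem_insert _ _)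
    rcases hv with rfl | ⟨A, ⟨hA, hu⟩, hv⟩
    · exact .inl rfl
    · exact .inr ⟨A, hA, hu, hv⟩
  · rintro (rfl | ⟨A, hA, hu, hv⟩)
    · rfl
    · have hblock {w} (hw : w ∈ A) : insert w (⋃₀ {B ∈ 𝒜 | w ∈ B}) = A := by
        have huniq : {B ∈ 𝒜 | w ∈ B} = {A} := Set.eq_singleton_iff_unique_mem.2
          ⟨⟨hA, hw⟩, fun B hB => h𝒜.elim_set hB.1 hA w hB.2 hw⟩
        rw [huniq, Set.sUnion_singleton, Set.insert_eq_of_mem hw]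
      exact (hblock hu).trans (hblock hv).symm

theorem exists_injective_color {α : Type*} [Countable α] {s : Fin 3 → α}
    (hs : Function.Injective s) :
    ∃ e : α → Color, Function.Injective e ∧ ∀ i, e (s i) = .inl i := by
  obtain ⟨code, hcode⟩ := exists_injective_nat α
  refine ⟨Function.extend s Sum.inl (Sum.inr ∘ code), fun a b hab => ?_, hs.extend_apply _ _⟩
  by_cases ha : ∃ i, s i = a <;> by_cases hb : ∃ i, s i = b
  · obtain ⟨⟨i, rfl⟩, ⟨k, rfl⟩⟩ := ha, hb
    rw [hs.extend_apply, hs.extend_apply] at hab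
    exact congrArg s (Sum.inl_injective hab)
  · obtain ⟨i, rfl⟩ := ha
    rw [hs.extend_apply, Function.extend_apply' _ _ _ hb] at hab
    exact absurd hab Sum.inl_ne_inr
  · obtain ⟨k, rfl⟩ := hb
    rw [hs.extend_apply, Function.extend_apply' _ _ _ ha] at hab
    exact absurd hab Sum.inr_ne_inl
  · rw [Function.extend_apply' _ _ _ ha, Function.extend_apply' _ _ _ hb] at hab
    exact hcode (Sum.inr_injective hab)

theorem exists_coloring_of_pairwise_disjoint (hA : G.Assumption1) (hTS : G.TerminalSeparable)
    (h : ∀ j₁ j₂, j₁ ≠ j₂ → (G.Lambda {j₁}).ncard = 2 → (G.Lambda {j₂}).ncard = 2 →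
      G.Lambda {j₁} ∩ G.Lambda {j₂} = ∅) :
    ∃ χ : G.V → Color, (∀ i, χ (G.S i) = .inl i) ∧ (∀ l, Set.InjOn χ (G.line l)) ∧
      ∀ j, (G.Lambda {j}).ncard = 2 → ∀ u ∈ G.Lambda {j}, ∀ v ∈ G.Lambda {j}, χ u = χ v := by
  have := G.fintypeV
  let 𝒜 : Set (Set G.V) := {A | A.ncard = 2 ∧ ∃ j, G.Lambda {j} = A}
  have h𝒜 : 𝒜.PairwiseDisjoint id := by
    rintro _ ⟨h₁, j₁, rfl⟩ _ ⟨h₂, j₂, rfl⟩ hne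
    exact Set.disjoint_iff_inter_eq_empty.2 (h j₁ j₂ (fun hj => hne (by rw [hj])) h₁ h₂)
  obtain ⟨f, hf⟩ := exists_apply_eq_iff_of_pairwiseDisjoint h𝒜
  have hinj (l) : Set.InjOn f (G.line l) := by
    intro u hu v hv huv
    by_contra hne
    rcases (hf u v).1 huv with rfl | ⟨_, ⟨hcard, j, rfl⟩, huj, hvj⟩
    · exact hne rfl
    · obtain ⟨w, hw, hwl⟩ := exists_mem_Lambda_notMem_line hA hTS j l
      have hthree : 2 < (G.Lambda {j}).ncard := (Set.two_lt_ncard_iff).2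
        ⟨u, v, w, huj, hvj, hw, hne, fun h => hwl (h ▸ hu), fun h => hwl (h ▸ hv)⟩
      omega
  have hsource : Function.Injective (f ∘ G.S) := by
    intro i k hik
    obtain ⟨m, hmi, hmk⟩ := Fin.exists_ne_and_ne_of_two_lt i k (by decide)
    exact G.S_inj (hinj m (source_mem_line_iff.2 hmi.symm) (source_mem_line_iff.2 hmk.symm) hik)
  obtain ⟨e, he, heS⟩ := exists_injective_color hsource
  exact ⟨e ∘ f, heS, fun l => (he.injOn).comp (hinj l) (Set.mapsTo_univ _ _),
    fun j hj u hu v hv => congrArg e ((hf u v).2 (.inr ⟨_, ⟨hj, j, rfl⟩, hu, hv⟩))⟩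

theorem eq_source_of_color_eq {χ : G.V → Color} (hS : ∀ i, χ (G.S i) = .inl i) {l m : Fin 3}
    (hinj : Set.InjOn χ (G.line l)) (hlm : l ≠ m) {v : G.V} (hv : v ∈ G.line l)
    (hvm : χ v = .inl m) : v = G.S m :=
  hinj hv (source_mem_line_iff.2 hlm.symm) (hvm.trans (hS m).symm)

theorem Decodable.of_three_le_ncard {χ : G.V → Color} (hS : ∀ i, χ (G.S i) = .inl i)
    (hinj : ∀ l, Set.InjOn χ (G.line l)) {A : Set G.V} (hPi : A ⊆ G.bigPi)
    (hline : ∀ l, (A ∩ G.line l).Subsingleton) (hinjA : Set.InjOn χ A) (hcard : 3 ≤ A.ncard) :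
    Decodable χ A := by
  choose! lineOf hlineOf using fun v (hv : v ∈ A) => mem_bigPi_iff.1 (hPi hv)
  have hlineOf_inj : Set.InjOn lineOf A := fun u hu v hv huv =>
    hline _ ⟨hu, hlineOf u hu⟩ ⟨hv, huv ▸ hlineOf v hv⟩
  have himage : lineOf '' A = Set.univ := by
    refine Set.eq_of_subset_of_ncard_le (Set.subset_univ _) ?_
    rwa [hlineOf_inj.ncard_image, Set.ncard_univ, Nat.card_fin]
  choose f hfA hf using fun i => himage.superset (Set.mem_univ i)
  have hmem (i) : f i ∈ A ∩ G.line i := ⟨hfA i, by simpa only [hf i] using hlineOf _ (hfA i)⟩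
  have hf_inj : Function.Injective f := Function.LeftInverse.injective hf
  refine .triangle hmem ⟨fun i k hik => hf_inj (hinjA (hfA i) (hfA k) hik), fun i m him => ?_⟩
  by_contra hmi
  have hfi : f i = G.S m := eq_source_of_color_eq hS (hinj i) (Ne.symm hmi) (hmem i).2 him
  obtain ⟨k, hki, hkm⟩ := Fin.exists_ne_and_ne_of_two_lt i m (by decide)
  refine hki.symm (hf_inj (hline k ⟨hfA i, ?_⟩ (hmem k)))
  rw [hfi]
  exact source_mem_line_iff.2 hkm.symm

theorem Decodable.of_injOn_line {χ : G.V → Color} (hS : ∀ i, χ (G.S i) = .inl i)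
    (hinj : ∀ l, Set.InjOn χ (G.line l)) {A : Set G.V} (hPi : A ⊆ G.bigPi)
    (hoff : ∀ l, ∃ v ∈ A, v ∉ G.line l)
    (hpair : A.ncard = 2 → ∀ u ∈ A, ∀ v ∈ A, χ u = χ v) : Decodable χ A := by
  have := G.fintypeV
  by_cases hline : ∀ l, (A ∩ G.line l).Subsingleton
  · by_cases hinjA : Set.InjOn χ A
    · refine .of_three_le_ncard hS hinj hPi hline hinjA ?_
      obtain ⟨u, hu, -⟩ := hoff 0
      obtain ⟨l, hl⟩ := mem_bigPi_iff.1 (hPi hu)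
      obtain ⟨v, hv, hvl⟩ := hoff l
      have hne : u ≠ v := fun h => hvl (h ▸ hl)
      have hone : 1 < A.ncard := (Set.one_lt_ncard_iff).2 ⟨u, v, hu, hv, hne⟩
      have htwo : A.ncard ≠ 2 := fun h => hne (hinjA hu hv (hpair h u hu v hv))
      omega
    · simp only [Set.InjOn, not_forall] at hinjA
      obtain ⟨u, hu, v, hv, huv, hne⟩ := hinjA
      obtain ⟨k, hk⟩ := mem_bigPi_iff.1 (hPi hu)
      obtain ⟨l, hl⟩ := mem_bigPi_iff.1 (hPi hv)
      have hkl : k ≠ l := by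
        rintro rfl
        exact hne (hline k ⟨hu, hk⟩ ⟨hv, hl⟩)
      obtain ⟨m, hmk, hml⟩ := Fin.exists_ne_and_ne_of_two_lt k l (by decide)
      refine .same hkl hmk.symm hml.symm ⟨hu, hk⟩ ⟨hv, hl⟩ huv fun hum => hne ?_
      rw [eq_source_of_color_eq hS (hinj k) hmk.symm hk hum,
        eq_source_of_color_eq hS (hinj l) hml.symm hl (huv.symm.trans hum)]
  · simp only [Set.Subsingleton, not_forall] at hline
    obtain ⟨l, u, hu, v, hv, hne⟩ := hline
    obtain ⟨w, hw, hwl⟩ := hoff l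
    obtain ⟨k, hk⟩ := mem_bigPi_iff.1 (hPi hw)
    have hkl : k ≠ l := by
      rintro rfl
      exact hwl hk
    obtain ⟨m, hmk, hml⟩ := Fin.exists_ne_and_ne_of_two_lt k l (by decide)
    refine .line hkl hmk.symm hml.symm hu hv ((hinj l).ne hu.2 hv.2 hne) ⟨hw, hk⟩ fun hwm => hwl ?_
    rw [eq_source_of_color_eq hS (hinj k) hmk.symm hk hwm]
    exact source_mem_line_iff.2 hml

theorem feasible_of_pairwise_disjoint (hA : G.Assumption1) (hTS : G.TerminalSeparable)
    (h : ∀ j₁ j₂, j₁ ≠ j₂ → (G.Lambda {j₁}).ncard = 2 → (G.Lambda {j₂}).ncard = 2 →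
      G.Lambda {j₁} ∩ G.Lambda {j₂} = ∅) : G.Feasible := by
  obtain ⟨χ, hS, hinj, hpair⟩ := exists_coloring_of_pairwise_disjoint hA hTS h
  refine feasible_of_coloring hA hTS hS (fun v hv hsource => .inr ?_) fun j =>
    .of_injOn_line hS hinj (fun _ hv => hv.1) (exists_mem_Lambda_notMem_line hA hTS j) (hpair j)
  obtain ⟨p, q, hpq, hp, hq⟩ := exists_two_parents hsource
  obtain ⟨l, hl⟩ := mem_bigPi_iff.1 hv
  exact ⟨p, q, hp, hq, (hinj l).ne (parent_mem_line hl hp) (parent_mem_line hl hq) hpq⟩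

end InjectiveOnLines

end RegionGraph

theorem exists_forall_ne_of_ne {p : Fin 3 → Prop} {j₁ j₂ : Fin 3} (hne : j₁ ≠ j₂) (h₁ : p j₁)
    (h₂ : p j₂) : ∃ j₀, ∀ j ≠ j₀, p j := by
  obtain ⟨j₀, h₁₀, h₂₀⟩ := Fin.exists_ne_and_ne_of_two_lt j₁ j₂ (by decide)
  refine ⟨j₀, fun j hj => ?_⟩
  obtain rfl | rfl : j = j₁ ∨ j = j₂ := by omega
  exacts [h₁, h₂]

theorem three_terminal_sufficient_general {n : ℕ} (G : RegionGraph n)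
    (hA : G.Assumption1) (hTS : G.TerminalSeparable)
    (h : (∃ j₀, ∀ j ≠ j₀, 3 ≤ (G.Lambda {j}).ncard) ∨
         (∀ j₁ j₂, j₁ ≠ j₂ →
            (G.Lambda {j₁}).ncard = 2 → (G.Lambda {j₂}).ncard = 2 →
            G.Lambda {j₁} ∩ G.Lambda {j₂} = ∅) ∨
         (∀ i j, G.S i ∉ G.Lambda {j}) ∨
         (∃ l l', l ≠ l' ∧ ∀ j, (G.Lambda {j} ∩ G.regO {G.S l, G.S l'}).Nonempty)) :
    G.Feasible := by
  rcases h with ⟨j₀, hthree⟩ | hdisj | hsource | ⟨l, l', hll', hinter⟩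
  · refine G.feasible_of_pairwise_disjoint hA hTS fun j₁ j₂ hne h₁ h₂ => ?_
    rcases ne_or_eq j₁ j₀ with hj | rfl
    · have := hthree j₁ hj
      omega
    · have := hthree j₂ hne.symm
      omega
  · exact G.feasible_of_pairwise_disjoint hA hTS hdisj
  · exact G.feasible_of_source_notMem_Lambda hA hTS hsource
  · exact G.feasible_of_Lambda_inter_regO_nonempty hA hTS hll' hinter

/-- Sufficient conditions for feasibility of a terminal-separable region graph
with exactly three terminals satisfying Assumption 1. -/
theorem three_terminal_sufficient (G : RegionGraph 3)
    (hA : G.Assumption1) (hTS : G.TerminalSeparable)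
    (h : (∃ j₁ j₂ : Fin 3, j₁ ≠ j₂ ∧
            3 ≤ (G.Lambda {j₁}).ncard ∧ 3 ≤ (G.Lambda {j₂}).ncard) ∨
         (∀ j₁ j₂ : Fin 3, j₁ ≠ j₂ →
            (G.Lambda {j₁}).ncard = 2 → (G.Lambda {j₂}).ncard = 2 →
            G.Lambda {j₁} ∩ G.Lambda {j₂} = ∅) ∨
         (∀ i j : Fin 3, G.S i ∉ G.Lambda {j}) ∨
         (∃ l l' : Fin 3, l ≠ l' ∧ ∀ j : Fin 3,
            (G.Lambda {j} ∩ G.regO {G.S l, G.S l'}).Nonempty)) :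
    G.Feasible := by
  exact three_terminal_sufficient_general G hA hTS
    (h.imp_left fun ⟨_, _, hne, h₁, h₂⟩ => exists_forall_ne_of_ne hne h₁ h₂)

end SumNetworksPaper
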